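/- Let G be a simple graph on n ≥ 3 vertices that is outer 6-planar, i.e., its vertices can be arranged in a cyclic order (equivalently, placed in convex position with straight-line edges) such that every edge is crossed by at most 6 other edges. Then G has at most 5n − 10 edges. -/

import Mathlib

/-- `x` lies strictly between `a` and `b` in the cyclic order of `Fin n`
(going forward from `a` to `b` along the cycle). -/
def cycBtw (n : ℕ) (a b x : Fin n) : Prop :=
  0 < (x.val + n - a.val) % n ∧ (x.val + n - a.val) % n < (b.val + n - a.val) % n

/-- Two edges `e` and `f` cross in the cyclic order determined by the positions `σ`:
they have four distinct endpoints and the endpoints interleave, i.e. exactly one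
endpoint of `f` lies strictly between the endpoints of `e`. -/
def crossing (n : ℕ) (σ : Fin n → Fin n) (e f : Sym2 (Fin n)) : Prop :=
  ∃ a b c d : Fin n, e = s(a, b) ∧ f = s(c, d) ∧
    a ≠ b ∧ c ≠ d ∧ a ≠ c ∧ a ≠ d ∧ b ≠ c ∧ b ≠ d ∧
    (cycBtw n (σ a) (σ b) (σ c) ↔ ¬ cycBtw n (σ a) (σ b) (σ d))

/-- With respect to the cyclic order given by positions `σ`, every edge of `G`
is crossed by at most `k` other edges. -/
def OuterKPlanarOrd (n k : ℕ) (σ : Fin n → Fin n) (G : SimpleGraph (Fin n)) : Prop :=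
  ∀ e ∈ G.edgeSet, ({f ∈ G.edgeSet | crossing n σ e f}).ncard ≤ k

/-- `G` is outer `k`-planar: its vertices can be arranged in a cyclic order such
that every edge is crossed by at most `k` other edges. -/
def IsOuterKPlanar (n k : ℕ) (G : SimpleGraph (Fin n)) : Prop :=
  ∃ σ : Fin n ≃ Fin n, OuterKPlanarOrd n k (⇑σ) G

/-!
Place the vertices on a line and read each edge as a chord `(a, b)` with `a < b`. Fix `ℓ` and take
a chord `q` with as few vertices strictly below it as possible, subject to there being `m ≥ ℓ` of
them. Any other chord ending strictly below `q` either crosses `q`, of which there are at most `k`,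
or is nested in `q` and hence has fewer than `ℓ` vertices below it. There are at most
`ℓ (2m + 3 - ℓ) / 2` chords of the latter kind on the `m + 2` vertices of `q`, so deleting the `m`
vertices below `q` costs at most `k + ℓ (2m + 3 - ℓ) / 2` edges. When `ℓ² ≤ 3ℓ + 2k` this is at
most `((ℓ + 3) / 2 + k / ℓ) m`, with equality for `m = ℓ`, and induction bounds the number of
edges by `((ℓ + 3) / 2 + k / ℓ) (n - 2)`. If only the two ends of `q` remain, then `q` is the one
surviving edge and is itself uncrossed, so the allowance of `k ≥ 1` for its crossings pays for it.
For `k = 6` the choice `ℓ = 3` gives the factor `5`.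
-/

section Chords

open Finset

variable {α : Type*} [LinearOrder α] {V : Finset α} {E : Finset (α × α)} {k ℓ : ℕ}

/-- The chords `p` and `q`, each given by its endpoints in increasing order, cross. -/
def Interleave (p q : α × α) : Prop :=
  (p.1 < q.1 ∧ q.1 < p.2 ∧ p.2 < q.2) ∨ (q.1 < p.1 ∧ p.1 < q.2 ∧ q.2 < p.2)

instance (p : α × α) : DecidablePred (Interleave p) :=
  fun _ ↦ inferInstanceAs (Decidable (_ ∨ _))

/-- `E` is a set of chords on the vertex set `V`, each given by its endpoints in increasing
order. The vertices keep their names when some of them are deleted, so `V` need not be an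
interval. -/
def IsChordSet (V : Finset α) (E : Finset (α × α)) : Prop :=
  ∀ p ∈ E, p.1 ∈ V ∧ p.2 ∈ V ∧ p.1 < p.2

/-- The vertices of `V` lying strictly below the chord `p`; their number measures its length. -/
def chordInterior (V : Finset α) (p : α × α) : Finset α :=
  {x ∈ V | p.1 < x ∧ x < p.2}

theorem mem_chordInterior {p : α × α} {x : α} :
    x ∈ chordInterior V p ↔ x ∈ V ∧ p.1 < x ∧ x < p.2 :=
  mem_filter

theorem chordInterior_mono {V' : Finset α} (h : V' ⊆ V) (p : α × α) :
    chordInterior V' p ⊆ chordInterior V p :=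
  filter_subset_filter _ h

/-- The chords of `E` that survive when the vertices strictly below the chord `q` are deleted. -/
def chordsAvoiding (V : Finset α) (E : Finset (α × α)) (q : α × α) : Finset (α × α) :=
  {p ∈ E | p.1 ∉ chordInterior V q ∧ p.2 ∉ chordInterior V q}

theorem mem_chordsAvoiding {p q : α × α} :
    p ∈ chordsAvoiding V E q ↔ p ∈ E ∧ p.1 ∉ chordInterior V q ∧ p.2 ∉ chordInterior V q :=
  mem_filter

theorem card_le_of_card_chordInterior_lt {S : Finset α} {b : α} (hSV : S ⊆ V)
    (hb : ∀ a ∈ S, a < b) (hS : ∀ a ∈ S, (chordInterior V (a, b)).card < ℓ) : S.card ≤ ℓ := by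
  obtain rfl | hne := S.eq_empty_or_nonempty
  · simp
  have hmin := S.min'_mem hne
  have hsub : S.erase (S.min' hne) ⊆ chordInterior V (S.min' hne, b) := fun x hx ↦
    have hxS := mem_of_mem_erase hx
    mem_chordInterior.2 ⟨hSV hxS, S.min'_lt_of_mem_erase_min' hne hx, hb x hxS⟩
  have hcard := card_le_card hsub
  rw [card_erase_of_mem hmin] at hcard
  have := hS _ hmin
  omega

theorem IsChordSet.card_filter_snd_eq_le (hE : IsChordSet V E)
    (hshort : ∀ p ∈ E, (chordInterior V p).card < ℓ) (b : α) :
    (E.filter (·.2 = b)).card ≤ min ℓ (V.filter (· < b)).card := by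
  have hinj : Set.InjOn Prod.fst (E.filter (·.2 = b) : Set (α × α)) := fun p hp q hq h ↦
    Prod.ext h ((mem_filter.1 hp).2.trans (mem_filter.1 hq).2.symm)
  have hfst : (E.filter (·.2 = b)).image Prod.fst ⊆ V.filter (· < b) := by
    refine image_subset_iff.2 fun p hp ↦ ?_
    obtain ⟨hpE, rfl⟩ := mem_filter.1 hp
    exact mem_filter.2 ⟨(hE p hpE).1, (hE p hpE).2.2⟩
  rw [← card_image_of_injOn hinj]
  refine le_min (card_le_of_card_chordInterior_lt (hfst.trans (filter_subset _ _))
    (fun a ha ↦ (mem_filter.1 (hfst ha)).2) fun a ha ↦ ?_) (card_le_card hfst)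
  obtain ⟨⟨a, c⟩, hp, rfl⟩ := mem_image.1 ha
  obtain ⟨hp, hc⟩ := mem_filter.1 hp
  exact hc ▸ hshort _ hp

theorem IsChordSet.card_le_sum_min (hE : IsChordSet V E)
    (hshort : ∀ p ∈ E, (chordInterior V p).card < ℓ) :
    E.card ≤ ∑ j ∈ range V.card, min ℓ j := by
  induction V using Finset.induction_on_max generalizing E with
  | empty =>
    have : E = ∅ := eq_empty_of_forall_notMem fun p hp ↦ by simpa using (hE p hp).1
    simp [this]
  | insert b V hmax ih =>
    have hbV : b ∉ V := fun h ↦ (hmax b h).false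
    have hold : (E.filter (·.2 ≠ b)).card ≤ ∑ j ∈ range V.card, min ℓ j := by
      refine ih (fun p hp ↦ ?_) fun p hp ↦ ?_ <;> obtain ⟨hp, hpb⟩ := mem_filter.1 hp
      · obtain ⟨h₁, h₂, hlt⟩ := hE p hp
        have h₂ := mem_of_mem_insert_of_ne h₂ hpb
        exact ⟨mem_of_mem_insert_of_ne h₁ (hlt.trans (hmax _ h₂)).ne, h₂, hlt⟩
      · exact (card_le_card (chordInterior_mono (subset_insert b V) p)).trans_lt (hshort p hp)
    have hnew := hE.card_filter_snd_eq_le hshort b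
    rw [filter_insert, if_neg (lt_irrefl b), filter_true_of_mem hmax] at hnew
    rw [card_insert_of_notMem hbV, sum_range_succ, ← card_filter_add_card_filter_not (·.2 ≠ b)]
    simpa only [ne_eq, not_not] using add_le_add hold hnew

theorem card_chordInterior_lt_of_nested {p q : α × α} (h₁ : q.1 ≤ p.1) (h₂ : p.2 ≤ q.2)
    (hp : p.1 ∈ chordInterior V q ∨ p.2 ∈ chordInterior V q) :
    (chordInterior V p).card < (chordInterior V q).card := by
  refine card_lt_card ⟨fun x hx ↦ ?_, fun hsub ↦ ?_⟩
  · obtain ⟨hxV, hx₁, hx₂⟩ := mem_chordInterior.1 hx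
    exact mem_chordInterior.2 ⟨hxV, h₁.trans_lt hx₁, hx₂.trans_le h₂⟩
  · rcases hp with hp | hp
    · exact (mem_chordInterior.1 (hsub hp)).2.1.false
    · exact (mem_chordInterior.1 (hsub hp)).2.2.false

theorem card_filter_mem_Icc_le (V : Finset α) (q : α × α) :
    (V.filter fun x ↦ q.1 ≤ x ∧ x ≤ q.2).card ≤ (chordInterior V q).card + 2 := by
  have hsub : (V.filter fun x ↦ q.1 ≤ x ∧ x ≤ q.2) ⊆ chordInterior V q ∪ {q.1, q.2} := by
    intro x
    simp only [mem_filter, mem_union, mem_chordInterior, mem_insert, mem_singleton]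
    grind
  exact (card_le_card hsub).trans <| (card_union_le _ _).trans <|
    Nat.add_le_add_left card_le_two _

theorem IsChordSet.card_le_sum_min_of_nested (hE : IsChordSet V E) (q : α × α)
    (hshort : ∀ p ∈ E, q.1 ≤ p.1 ∧ p.2 ≤ q.2 ∧ (chordInterior V p).card < ℓ) :
    E.card ≤ ∑ j ∈ range ((chordInterior V q).card + 2), min ℓ j := by
  refine (card_le_sum_min (V := V.filter fun x ↦ q.1 ≤ x ∧ x ≤ q.2) (fun p hp ↦ ?_)
    fun p hp ↦ ?_).trans (sum_le_sum_of_subset (range_mono (card_filter_mem_Icc_le V q)))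
  · obtain ⟨h₁, h₂, hlt⟩ := hE p hp
    obtain ⟨hq₁, hq₂, -⟩ := hshort p hp
    exact ⟨mem_filter.2 ⟨h₁, hq₁, hlt.le.trans hq₂⟩,
      mem_filter.2 ⟨h₂, hq₁.trans hlt.le, hq₂⟩, hlt⟩
  · exact (card_le_card (chordInterior_mono (filter_subset _ _) p)).trans_lt (hshort p hp).2.2

theorem interleave_of_not_nested {p q : α × α} (hnest : ¬(q.1 ≤ p.1 ∧ p.2 ≤ q.2))
    (hp : p.1 ∈ chordInterior V q ∨ p.2 ∈ chordInterior V q) : Interleave q p := by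
  rcases hp with hp | hp <;> obtain ⟨-, h₁, h₂⟩ := mem_chordInterior.1 hp
  · exact .inl ⟨h₁, h₂, lt_of_not_ge fun h ↦ hnest ⟨h₁.le, h⟩⟩
  · exact .inr ⟨lt_of_not_ge fun h ↦ hnest ⟨h, h₂.le⟩, h₁, h₂⟩

theorem IsChordSet.card_le_add_sum_min_of_minimal (hE : IsChordSet V E) {q : α × α}
    (hmin : ∀ p ∈ E, ℓ ≤ (chordInterior V p).card →
      (chordInterior V q).card ≤ (chordInterior V p).card) :
    E.card ≤ (chordsAvoiding V E q).card + (E.filter (Interleave q)).card +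
      ∑ j ∈ range ((chordInterior V q).card + 2), min ℓ j := by
  set W := E.filter fun p ↦ q.1 ≤ p.1 ∧ p.2 ≤ q.2 ∧ (chordInterior V p).card < ℓ with hW
  have hcover : E ⊆ chordsAvoiding V E q ∪ E.filter (Interleave q) ∪ W := by
    intro p hp
    simp only [hW, mem_union, mem_chordsAvoiding, mem_filter, hp, true_and]
    by_cases hends : p.1 ∈ chordInterior V q ∨ p.2 ∈ chordInterior V q
    · by_cases hnest : q.1 ≤ p.1 ∧ p.2 ≤ q.2
      · exact .inr ⟨hnest.1, hnest.2, lt_of_not_ge fun hlong ↦ (hmin p hp hlong).not_gt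
          (card_chordInterior_lt_of_nested hnest.1 hnest.2 hends)⟩
      · exact .inl (.inr (interleave_of_not_nested hnest hends))
    · exact .inl (.inl (not_or.1 hends))
  have hWcard : W.card ≤ ∑ j ∈ range ((chordInterior V q).card + 2), min ℓ j :=
    card_le_sum_min_of_nested (fun p hp ↦ hE p (filter_subset _ _ hp)) q
      fun p hp ↦ (mem_filter.1 hp).2
  exact (card_le_card hcover).trans <| (card_union_le _ _).trans <|
    add_le_add (card_union_le _ _) hWcard

theorem two_mul_sum_range_min_add {v : ℕ} (h : ℓ ≤ v) :
    2 * ∑ j ∈ range v, min ℓ j + ℓ * (ℓ + 1) = 2 * ℓ * v := by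
  induction v, h using Nat.le_induction with
  | base =>
    have hsum : ∑ j ∈ range ℓ, min ℓ j = ∑ j ∈ range ℓ, j :=
      sum_congr rfl fun j hj ↦ min_eq_right (mem_range.1 hj).le
    have hgauss := sum_range_id_mul_two (ℓ + 1)
    rw [sum_range_succ, Nat.add_sub_cancel] at hgauss
    rw [hsum]
    linarith
  | succ v hv ih =>
    rw [sum_range_succ, min_eq_left hv]
    linarith

theorem sum_range_min_add_le {m : ℕ} (hm : ℓ ≤ m) (hℓ : ℓ ^ 2 ≤ 3 * ℓ + 2 * k) :
    2 * ℓ * (k + ∑ j ∈ range (m + 2), min ℓ j) ≤ (ℓ ^ 2 + 3 * ℓ + 2 * k) * m := by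
  have hsum := two_mul_sum_range_min_add (hm.trans (Nat.le_add_right m 2))
  obtain ⟨d, rfl⟩ := Nat.exists_eq_add_of_le hm
  -- The difference of the two sides is `(3ℓ + 2k - ℓ²) (m - ℓ)`.
  have := Nat.mul_le_mul_right d hℓ
  nlinarith

theorem sum_range_min_le {m : ℕ} (hm : 1 ≤ m) (hk : 1 ≤ k) (hℓ : ℓ ^ 2 ≤ 3 * ℓ + 2 * k) :
    2 * ℓ * ∑ j ∈ range (m + 2), min ℓ j ≤ (ℓ ^ 2 + 3 * ℓ + 2 * k) * m := by
  rcases le_or_gt ℓ m with hle | hlt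
  · exact (Nat.mul_le_mul_left _ (Nat.le_add_left _ k)).trans (sum_range_min_add_le hle hℓ)
  have hsum : 2 * ∑ j ∈ range (m + 2), min ℓ j ≤ (m + 1) * (m + 2) := by
    have hgauss := sum_range_id_mul_two (m + 2)
    have := sum_le_sum fun j (_ : j ∈ range (m + 2)) ↦ min_le_right ℓ j
    rw [show m + 2 - 1 = m + 1 by omega] at hgauss
    linarith
  have hcomplete : ℓ * ((m + 1) * (m + 2)) ≤ (ℓ ^ 2 + 3 * ℓ + 2 * k) * m := by
    -- The difference of the two sides is `ℓ (m (ℓ - m) - 2) + 2km`, whose first term is negative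
    -- only for `m = 1`, `ℓ = 2`.
    obtain ⟨d, rfl⟩ := Nat.exists_eq_add_of_lt hlt
    obtain ⟨rfl, rfl⟩ | h : m = 1 ∧ d = 0 ∨ 2 ≤ m * (d + 1) := by
      rcases m with _ | _ | m <;> rcases d with _ | d <;> grind
    · omega
    · have := Nat.mul_le_mul_left (m + d + 1) h
      nlinarith [Nat.zero_le (k * m)]
  linarith [Nat.mul_le_mul_left ℓ hsum]

theorem IsChordSet.sdiff_chordInterior (hE : IsChordSet V E) (q : α × α) :
    IsChordSet (V \ chordInterior V q) (chordsAvoiding V E q) := fun p hp ↦ by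
  obtain ⟨hp, hp₁, hp₂⟩ := mem_chordsAvoiding.1 hp
  obtain ⟨h₁, h₂, hlt⟩ := hE p hp
  exact ⟨mem_sdiff.2 ⟨h₁, hp₁⟩, mem_sdiff.2 ⟨h₂, hp₂⟩, hlt⟩

theorem IsChordSet.pair_subset_sdiff_chordInterior (hE : IsChordSet V E) {q : α × α}
    (hq : q ∈ E) : {q.1, q.2} ⊆ V \ chordInterior V q := by
  simp [insert_subset_iff, mem_chordInterior, (hE q hq).1, (hE q hq).2.1]

theorem IsChordSet.two_le_card_sdiff_chordInterior (hE : IsChordSet V E) {q : α × α}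
    (hq : q ∈ E) : 2 ≤ (V \ chordInterior V q).card :=
  (card_pair (hE q hq).2.2.ne).ge.trans (card_le_card (hE.pair_subset_sdiff_chordInterior hq))

theorem IsChordSet.mem_Icc_of_card_sdiff_chordInterior_le_two (hE : IsChordSet V E) {q : α × α}
    (hq : q ∈ E) (hV : (V \ chordInterior V q).card ≤ 2) {x : α} (hx : x ∈ V) :
    q.1 ≤ x ∧ x ≤ q.2 := by
  have hlt := (hE q hq).2.2
  have heq := eq_of_subset_of_card_le (hE.pair_subset_sdiff_chordInterior hq)
    (hV.trans (card_pair hlt.ne).ge)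
  by_cases hxq : x ∈ chordInterior V q
  · exact ⟨(mem_chordInterior.1 hxq).2.1.le, (mem_chordInterior.1 hxq).2.2.le⟩
  · have : x ∈ ({q.1, q.2} : Finset α) := heq ▸ mem_sdiff.2 ⟨hx, hxq⟩
    rcases mem_insert.1 this with rfl | h
    · exact ⟨le_rfl, hlt.le⟩
    · rw [mem_singleton.1 h]
      exact ⟨hlt.le, le_rfl⟩

theorem IsChordSet.card_chordsAvoiding_add_card_interleave_le_one (hE : IsChordSet V E) {q : α × α}
    (hq : ∀ x ∈ V, q.1 ≤ x ∧ x ≤ q.2) :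
    (chordsAvoiding V E q).card + (E.filter (Interleave q)).card ≤ 1 := by
  have hcross : E.filter (Interleave q) = ∅ := filter_eq_empty_iff.2 fun p hp hpq ↦ by
    obtain ⟨h₁, h₂, -⟩ := hE p hp
    rcases hpq with ⟨-, -, h⟩ | ⟨h, -, -⟩
    · exact (hq _ h₂).2.not_gt h
    · exact (hq _ h₁).1.not_gt h
  have hkeep : chordsAvoiding V E q ⊆ {q} := by
    intro p hp
    obtain ⟨hp, hp₁, hp₂⟩ := mem_chordsAvoiding.1 hp
    obtain ⟨h₁, h₂, hlt⟩ := hE p hp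
    simp only [mem_chordInterior, h₁, h₂, true_and] at hp₁ hp₂
    have := hq _ h₁
    have := hq _ h₂
    exact mem_singleton.2 (Prod.ext (by grind) (by grind))
  rw [hcross, card_empty, add_zero]
  exact card_le_card hkeep

theorem IsChordSet.two_mul_mul_card_le_of_short (hE : IsChordSet V E) (hV : 3 ≤ V.card)
    (hk : 1 ≤ k) (hℓ : ℓ ^ 2 ≤ 3 * ℓ + 2 * k)
    (hshort : ∀ p ∈ E, (chordInterior V p).card < ℓ) :
    2 * ℓ * E.card ≤ (ℓ ^ 2 + 3 * ℓ + 2 * k) * (V.card - 2) := by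
  have hcard := hE.card_le_sum_min hshort
  rw [← Nat.sub_add_cancel (show 2 ≤ V.card by omega)] at hcard
  exact (Nat.mul_le_mul_left _ hcard).trans (sum_range_min_le (by omega) hk hℓ)

theorem IsChordSet.two_mul_mul_card_le (hE : IsChordSet V E) (hV : 3 ≤ V.card) (hk : 1 ≤ k)
    (hℓ : ℓ ^ 2 ≤ 3 * ℓ + 2 * k) (hcross : ∀ p ∈ E, (E.filter (Interleave p)).card ≤ k) :
    2 * ℓ * E.card ≤ (ℓ ^ 2 + 3 * ℓ + 2 * k) * (V.card - 2) := by
  induction V using Finset.strongInduction generalizing E with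
  | H V ih =>
  obtain rfl | hpos := ℓ.eq_zero_or_pos
  · simp
  obtain hnone | hlong := (E.filter fun p ↦ ℓ ≤ (chordInterior V p).card).eq_empty_or_nonempty
  · exact hE.two_mul_mul_card_le_of_short hV hk hℓ fun p hp ↦
      lt_of_not_ge (filter_eq_empty_iff.1 hnone hp)
  obtain ⟨q, hq, hmin⟩ := exists_min_image _ (fun p ↦ (chordInterior V p).card) hlong
  obtain ⟨hqE, hqlong⟩ := mem_filter.1 hq
  have hcard := hE.card_le_add_sum_min_of_minimal fun p hp hpl ↦ hmin p (mem_filter.2 ⟨hp, hpl⟩)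
  have hqV : chordInterior V q ⊆ V := filter_subset _ _
  have hVcard := card_sdiff_add_card_eq_card hqV
  set V' := V \ chordInterior V q
  have hrest : 2 * ℓ * ((chordsAvoiding V E q).card + (E.filter (Interleave q)).card) ≤
      (ℓ ^ 2 + 3 * ℓ + 2 * k) * (V'.card - 2) + 2 * ℓ * k := by
    rcases le_or_gt 3 V'.card with h | h
    · have hV' : V' ⊂ V := sdiff_ssubset hqV (card_pos.1 (by omega))
      have hsub : chordsAvoiding V E q ⊆ E := filter_subset _ _
      rw [mul_add]
      refine add_le_add (ih V' hV' (hE.sdiff_chordInterior q) h fun p hp ↦ ?_)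
        (Nat.mul_le_mul_left _ (hcross q hqE))
      exact (card_le_card (filter_subset_filter _ hsub)).trans (hcross p (hsub hp))
    · have hone := hE.card_chordsAvoiding_add_card_interleave_le_one fun x hx ↦
        hE.mem_Icc_of_card_sdiff_chordInterior_le_two hqE (Nat.le_of_lt_succ h) hx
      exact (Nat.mul_le_mul_left _ (hone.trans hk)).trans (Nat.le_add_left _ _)
  have hshort := sum_range_min_add_le hqlong hℓ
  have htwo : 2 ≤ V'.card := hE.two_le_card_sdiff_chordInterior hqE
  rw [show V.card - 2 = (V'.card - 2) + (chordInterior V q).card by omega]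
  linarith [Nat.mul_le_mul_left (2 * ℓ) hcard]

end Chords

section OuterKPlanar

variable {n k : ℕ}

theorem cycBtw_iff_of_lt {a b x : Fin n} (hab : a < b) : cycBtw n a b x ↔ a < x ∧ x < b := by
  have mod_of_le : ∀ y : Fin n, a ≤ y → (y.val + n - a.val) % n = y.val - a.val := fun y hy ↦ by
    rw [show y.val + n - a.val = y.val - a.val + n by omega, Nat.add_mod_right,
      Nat.mod_eq_of_lt (by omega)]
  unfold cycBtw
  rw [mod_of_le b hab.le]
  rcases le_or_gt a x with h | h
  · rw [mod_of_le x h]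
    omega
  · rw [Nat.mod_eq_of_lt (by omega)]
    omega

/-- The edge of the graph that is drawn as the chord with endpoints at the positions `p.1` and
`p.2`, when the vertex `v` is placed at the position `σ v`. -/
def edgeOfChord (σ : Fin n ≃ Fin n) (p : Fin n × Fin n) : Sym2 (Fin n) :=
  s(σ.symm p.1, σ.symm p.2)

theorem crossing_edgeOfChord_of_interleave (σ : Fin n ≃ Fin n) {p q : Fin n × Fin n}
    (hp : p.1 < p.2) (hq : q.1 < q.2) (h : Interleave p q) :
    crossing n σ (edgeOfChord σ p) (edgeOfChord σ q) := by
  unfold Interleave at h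
  refine ⟨_, _, _, _, rfl, rfl, ?_⟩
  simp only [ne_eq, EmbeddingLike.apply_eq_iff_eq, Equiv.apply_symm_apply, cycBtw_iff_of_lt hp]
  omega

theorem edgeOfChord_injOn (σ : Fin n ≃ Fin n) : Set.InjOn (edgeOfChord σ) {p | p.1 < p.2} := by
  rintro ⟨a, b⟩ hp ⟨c, d⟩ hq h
  simp only [edgeOfChord, Sym2.eq_iff, EmbeddingLike.apply_eq_iff_eq, Set.mem_ofPred_eq,
    Prod.mk.injEq] at hp hq h ⊢
  omega

open scoped Classical in
/-- The drawing of `G` with the vertex `v` at the position `σ v`, as a set of chords in the sense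
of `IsChordSet`: the circle is cut open before the position `0`. -/
noncomputable def chordsOf (σ : Fin n ≃ Fin n) (G : SimpleGraph (Fin n)) :
    Finset (Fin n × Fin n) :=
  {p | p.1 < p.2 ∧ edgeOfChord σ p ∈ G.edgeSet}

theorem mem_chordsOf {σ : Fin n ≃ Fin n} {G : SimpleGraph (Fin n)} {p : Fin n × Fin n} :
    p ∈ chordsOf σ G ↔ p.1 < p.2 ∧ edgeOfChord σ p ∈ G.edgeSet := by
  simp [chordsOf]

theorem isChordSet_chordsOf (σ : Fin n ≃ Fin n) (G : SimpleGraph (Fin n)) :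
    IsChordSet Finset.univ (chordsOf σ G) := fun _ hp ↦
  ⟨Finset.mem_univ _, Finset.mem_univ _, (mem_chordsOf.1 hp).1⟩

theorem bijOn_edgeOfChord (σ : Fin n ≃ Fin n) (G : SimpleGraph (Fin n)) :
    Set.BijOn (edgeOfChord σ) (chordsOf σ G) G.edgeSet := by
  refine ⟨fun p hp ↦ (mem_chordsOf.1 hp).2,
    (edgeOfChord_injOn σ).mono fun p hp ↦ (mem_chordsOf.1 hp).1, fun e he ↦ ?_⟩
  induction e with | _ x y
  have hne : σ x ≠ σ y := σ.injective.ne (G.ne_of_adj he)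
  rcases hne.lt_or_gt with hlt | hlt
  · exact ⟨(σ x, σ y), mem_chordsOf.2 ⟨hlt, by simpa [edgeOfChord] using he⟩,
      by simp [edgeOfChord]⟩
  · exact ⟨(σ y, σ x), mem_chordsOf.2 ⟨hlt, by simpa [edgeOfChord] using G.adj_symm he⟩,
      by simp [edgeOfChord, Sym2.eq_swap]⟩

theorem ncard_edgeSet_eq_card_chordsOf (σ : Fin n ≃ Fin n) (G : SimpleGraph (Fin n)) :
    G.edgeSet.ncard = (chordsOf σ G).card := by
  have hbij := bijOn_edgeOfChord σ G
  rw [← hbij.image_eq, hbij.injOn.ncard_image, Set.ncard_coe_finset]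

theorem OuterKPlanarOrd.card_filter_interleave_le {σ : Fin n ≃ Fin n} {G : SimpleGraph (Fin n)}
    (hσ : OuterKPlanarOrd n k σ G) {p : Fin n × Fin n} (hp : p ∈ chordsOf σ G) :
    ((chordsOf σ G).filter (Interleave p)).card ≤ k := by
  obtain ⟨hlt, hpG⟩ := mem_chordsOf.1 hp
  refine le_trans ?_ (hσ _ hpG)
  rw [← Set.ncard_coe_finset]
  refine Set.ncard_le_ncard_of_injOn (edgeOfChord σ) (fun q hq ↦ ?_)
    ((bijOn_edgeOfChord σ G).injOn.mono (Finset.filter_subset _ _)) (Set.toFinite _)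
  obtain ⟨hq, hpq⟩ := Finset.mem_filter.1 hq
  exact ⟨(mem_chordsOf.1 hq).2,
    crossing_edgeOfChord_of_interleave σ hlt (mem_chordsOf.1 hq).1 hpq⟩

end OuterKPlanar

/-- With denominators cleared, the factor of `n - 2` is `(ℓ + 3) / 2 + k / ℓ`, which is least for
`ℓ` near `√(2k)`. -/
theorem outer_six_planar_edge_bound_general (n k ℓ : ℕ) (hn : 3 ≤ n) (hk : 1 ≤ k)
    (hℓ : ℓ ^ 2 ≤ 3 * ℓ + 2 * k) (G : SimpleGraph (Fin n)) (hG : IsOuterKPlanar n k G) :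
    2 * ℓ * G.edgeSet.ncard ≤ (ℓ ^ 2 + 3 * ℓ + 2 * k) * (n - 2) := by
  obtain ⟨σ, hσ⟩ := hG
  rw [ncard_edgeSet_eq_card_chordsOf σ]
  simpa only [Finset.card_fin] using (isChordSet_chordsOf σ G).two_mul_mul_card_le
    (by rwa [Finset.card_fin]) hk hℓ fun p hp ↦ hσ.card_filter_interleave_le hp

/-- An `n`-vertex outer `6`-planar graph has at most `5n - 10` edges. -/
theorem outer_six_planar_edge_bound (n : ℕ) (hn : 3 ≤ n) (G : SimpleGraph (Fin n))
    (hG : IsOuterKPlanar n 6 G) :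
    G.edgeSet.ncard ≤ 5 * n - 10 := by
  have := outer_six_planar_edge_bound_general n 6 3 hn (by norm_num) (by norm_num) G hG
  omega
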